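/- Let M be a finitely generated FI-module over ℂ. Then there exist an integer N ≥ 0 and an exact sequence of FI-modules ⋯ → P_2 → P_1 → P_0 → M → 0 in which each P_i is a finitely generated projective object of the category of FI-modules that is generated in degrees ≤ N + i, i.e. P_i has a finite generating set consisting of elements m_j ∈ P_i(S_j) with |S_j| ≤ N + i. (In particular, every finitely generated FI-module has finite Castelnuovo–Mumford regularity: only finitely many linear strands of its minimal projective resolution are nonzero.) -/

import Mathlib

open CategoryTheory

structure FIObj where
  α : Type
  fin : Fintype α

instance (S : FIObj) : Fintype S.α := S.fin

def FIObj.of (α : Type) [Fintype α] : FIObj := ⟨α, inferInstance⟩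

instance : Category FIObj where
  Hom S T := {f : S.α → T.α // Function.Injective f}
  id S := ⟨id, Function.injective_id⟩
  comp f g := ⟨g.1 ∘ f.1, g.2.comp f.2⟩

/-- FI-modules over ℂ: functors from FI to ℂ-vector spaces. -/
abbrev FIMod := FIObj ⥤ ModuleCat.{0} ℂ

/-- A sub-FI-module. -/
structure FISub (M : FIMod) where
  carrier : ∀ S : FIObj, Submodule ℂ (M.obj S)
  map_mem : ∀ {S T : FIObj} (f : S ⟶ T) (x : M.obj S), x ∈ carrier S → M.map f x ∈ carrier T

/-- A finitely generated FI-module. -/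
def FIMod.FG (M : FIMod) : Prop :=
  ∃ (k : ℕ) (S : Fin k → FIObj) (m : ∀ i, M.obj (S i)),
    ∀ N : FISub M, (∀ i, m i ∈ N.carrier (S i)) → ∀ T, N.carrier T = ⊤
/-- Finite generation by generators lying in sets of cardinality at most `b`. -/
def FIMod.FGBound (M : FIMod) (b : ℕ) : Prop :=
  ∃ (k : ℕ) (S : Fin k → FIObj) (m : ∀ i, M.obj (S i)),
    (∀ i, Fintype.card (S i).α ≤ b) ∧
    ∀ N : FISub M, (∀ i, m i ∈ N.carrier (S i)) → ∀ T, N.carrier T = ⊤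

set_option linter.unusedSectionVars false

section CubeSec

structure Cube (V : Type) where
  F : Finset V → Type
  acg : ∀ T, AddCommGroup (F T)
  mod : ∀ T, Module ℂ (F T)
  r : ∀ {T U : Finset V}, T ⊆ U → F U →ₗ[ℂ] F T
  r_comp : ∀ {T U W : Finset V} (h : T ⊆ U) (h' : U ⊆ W) (z : F W),
    r h (r h' z) = r (h.trans h') z

attribute [instance] Cube.acg Cube.mod

variable {V : Type} [Fintype V] [LinearOrder V]

noncomputable def csgn (t : V) (T : Finset V) : ℂ := ∏ s ∈ T, if s < t then -1 else 1

lemma csgn_insert (t s : V) (T : Finset V) (h : s ∉ T) :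
    csgn t (insert s T) = (if s < t then -1 else 1) * csgn t T := by
  unfold csgn
  rw [Finset.prod_insert h]

lemma csgn_sq (t : V) (T : Finset V) : csgn t T * csgn t T = 1 := by
  unfold csgn
  rw [← Finset.prod_mul_distrib]
  apply Finset.prod_eq_one
  intro s _
  split_ifs <;> simp

lemma csgn_swap (s t : V) (T : Finset V) (hs : s ∉ T) (ht : t ∉ T) (hst : s ≠ t) :
    csgn s T * csgn t (insert s T) = - (csgn t T * csgn s (insert t T)) := by
  rw [csgn_insert _ _ _ hs, csgn_insert _ _ _ ht]
  rcases lt_or_gt_of_ne hst with h | h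
  · rw [if_pos h, if_neg h.not_gt]; ring
  · rw [if_pos h, if_neg h.not_gt]; ring

open Classical in
noncomputable def Cube.q (K : Cube V) (x : ∀ T, K.F T) (T U : Finset V) : K.F T :=
  if h : T ⊆ U then K.r h (x U) else 0

lemma Cube.q_of (K : Cube V) (x : ∀ T, K.F T) {T U : Finset V} (h : T ⊆ U) :
    K.q x T U = K.r h (x U) := by simp [Cube.q, h]

noncomputable def Cube.d (K : Cube V) (x : ∀ T, K.F T) (T : Finset V) : K.F T :=
  ∑ t ∈ Tᶜ, csgn t T • K.q x T (insert t T)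

def Cube.Supp (K : Cube V) (i : ℕ) (x : ∀ T, K.F T) : Prop := ∀ T : Finset V, T.card ≠ i → x T = 0

def Cube.HV (K : Cube V) (i : ℕ) : Prop :=
  ∀ x : ∀ T, K.F T, K.Supp i x → (∀ T, K.d x T = 0) →
    ∃ y : ∀ T, K.F T, K.Supp (i + 1) y ∧ ∀ T, K.d y T = x T

lemma Cube.q_sub (K : Cube V) (x y : ∀ T, K.F T) (T U : Finset V) :
    K.q (fun T => x T - y T) T U = K.q x T U - K.q y T U := by
  unfold Cube.q
  split_ifs <;> simp

lemma Cube.q_add (K : Cube V) (x y : ∀ T, K.F T) (T U : Finset V) :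
    K.q (fun T => x T + y T) T U = K.q x T U + K.q y T U := by
  unfold Cube.q
  split_ifs <;> simp

lemma Cube.d_sub (K : Cube V) (x y : ∀ T, K.F T) (T : Finset V) :
    K.d (fun T => x T - y T) T = K.d x T - K.d y T := by
  unfold Cube.d
  simp only [Cube.q_sub, smul_sub, Finset.sum_sub_distrib]

lemma Cube.d_add (K : Cube V) (x y : ∀ T, K.F T) (T : Finset V) :
    K.d (fun T => x T + y T) T = K.d x T + K.d y T := by
  unfold Cube.d
  simp only [Cube.q_add, smul_add, Finset.sum_add_distrib]

lemma Cube.d_supp (K : Cube V) (i : ℕ) (x : ∀ T, K.F T) (hx : K.Supp (i + 1) x) :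
    K.Supp i (K.d x) := by
  intro T hT
  unfold Cube.d
  apply Finset.sum_eq_zero
  intro t ht
  rw [K.q_of x (Finset.subset_insert t T), hx, map_zero, smul_zero]
  rw [Finset.card_insert_of_notMem (by simpa using ht)]
  omega

lemma Cube.d_d (K : Cube V) (x : ∀ T, K.F T) (T : Finset V) : K.d (K.d x) T = 0 := by
  classical
  set A : V → V → K.F T := fun s t =>
    if s ∉ T ∧ t ∉ T ∧ s ≠ t then (csgn s T * csgn t (insert s T)) • K.q x T (insert t (insert s T))
    else 0 with hA
  have hdd : K.d (K.d x) T = ∑ s, ∑ t, A s t := by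
    rw [Cube.d]
    rw [← Finset.sum_subset (Finset.subset_univ Tᶜ) (f := fun s => ∑ t, A s t)]
    · apply Finset.sum_congr rfl
      intro s hs
      rw [K.q_of _ (Finset.subset_insert s T), Cube.d, map_sum, Finset.smul_sum]
      rw [← Finset.sum_subset (Finset.subset_univ (insert s T)ᶜ) (f := fun t => A s t)]
      · apply Finset.sum_congr rfl
        intro t ht
        simp only [Finset.mem_compl, Finset.mem_insert, not_or] at hs ht
        rw [hA]
        simp only
        rw [if_pos ⟨hs, ht.2, fun h => ht.1 h.symm⟩, K.q_of _ (Finset.subset_insert _ _),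
          K.q_of _ ((Finset.subset_insert _ _).trans (Finset.subset_insert _ _)), map_smul,
          smul_smul, K.r_comp]
      · intro t _ ht
        simp only [Finset.mem_compl, Finset.mem_insert, not_not] at ht
        rw [hA]
        simp only
        rw [if_neg]
        rintro ⟨h1, h2, h3⟩
        rcases ht with h | h
        · exact h3 h.symm
        · exact h2 h
    · intro s _ hs
      simp only [Finset.mem_compl, not_not] at hs
      apply Finset.sum_eq_zero
      intro t _
      rw [hA]
      simp only
      rw [if_neg]
      rintro ⟨h1, h2, h3⟩
      exact h1 hs
  have hanti : ∀ s t, A s t = - A t s := by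
    intro s t
    simp only [hA]
    by_cases h : s ∉ T ∧ t ∉ T ∧ s ≠ t
    · rw [if_pos h, if_pos ⟨h.2.1, h.1, h.2.2.symm⟩, csgn_swap s t T h.1 h.2.1 h.2.2, neg_smul,
        Finset.insert_comm]
    · rw [if_neg h, if_neg (fun h' => h ⟨h'.2.1, h'.1, h'.2.2.symm⟩), neg_zero]
  have h2 : (∑ s, ∑ t, A s t) = - ∑ s, ∑ t, A s t := by
    conv_lhs => rw [Finset.sum_comm]
    rw [← Finset.sum_neg_distrib]
    apply Finset.sum_congr rfl
    intro s _
    rw [← Finset.sum_neg_distrib]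
    apply Finset.sum_congr rfl
    intro t _
    exact hanti t s
  rw [hdd]
  have h3 : (2 : ℂ) • (∑ s, ∑ t, A s t) = 0 := by
    rw [two_smul]
    nth_rewrite 1 [h2]
    simp
  exact (smul_eq_zero.mp h3).resolve_left two_ne_zero

end CubeSec

section StepSec

variable {V : Type} [Fintype V] [LinearOrder V]

lemma Cube.step (K : Cube V) (i : ℕ) (Φ : ∀ T, Submodule ℂ (K.F T))
    (hΦ : ∀ (T U : Finset V) (h : T ⊆ U) (z : K.F U), z ∈ Φ U → K.r h z ∈ Φ T)
    (e : ∀ T, K.F T) (he : ∀ (T U : Finset V) (h : T ⊆ U), e U ≠ 0 → K.r h (e U) = e T)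
    (E : V → Finset V → Prop) (C : Finset V) :
    (∀ c ∈ C, ∀ T U : Finset V, T ⊆ U → E c U → E c T) →
    (∀ c ∈ C, ∀ c' ∈ C, ∀ T : Finset V, c ∉ T → E c' T → E c' (insert c T)) →
    (∀ c ∈ C, ∀ T : Finset V, c ∉ T → E c T → (e T ∈ Φ T ↔ e (insert c T) ∈ Φ (insert c T))) →
    ∀ x : ∀ T, K.F T, K.Supp i x → (∀ T, K.d x T = 0) →
    (∀ T, ∃ a : ℂ, x T - a • e T ∈ Φ T ∧ (a ≠ 0 → ∃ c ∈ C, E c T)) →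
    ∃ y : ∀ T, K.F T, K.Supp (i + 1) y ∧ ∀ T, x T - K.d y T ∈ Φ T := by
  classical
  induction C using Finset.induction_on with
  | empty =>
    intro _ _ _ x hx hcyc hxΦ
    refine ⟨fun T => 0, fun T _ => rfl, fun T => ?_⟩
    obtain ⟨a, ha, ha'⟩ := hxΦ T
    have h0 : a = 0 := by
      by_contra h
      obtain ⟨c, hc, _⟩ := ha' h
      simp at hc
    have hd : K.d (fun T => 0) T = 0 := by
      have := K.d_sub x x T
      simpa using this
    rw [hd]
    simpa [h0] using ha
  | insert c C hcC ih =>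
    intro h1 h2 h3 x hx hcyc hxΦ
    choose a0 ha0 ha0' using hxΦ
    set P : Finset V → Prop := fun T => ∃ c' ∈ C, E c' T with hP
    have hPmono : ∀ T U : Finset V, T ⊆ U → P U → P T := by
      rintro T U hTU ⟨c', hc', h⟩
      exact ⟨c', hc', h1 c' (Finset.mem_insert_of_mem hc') T U hTU h⟩
    have hPins : ∀ T : Finset V, c ∉ T → P T → P (insert c T) := by
      rintro T hT ⟨c', hc', h⟩
      exact ⟨c', hc', h2 c (Finset.mem_insert_self _ _) c' (Finset.mem_insert_of_mem hc') T hT h⟩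
    have hE1 : ∀ T U : Finset V, T ⊆ U → E c U → E c T := h1 c (Finset.mem_insert_self _ _)
    have hE3 := h3 c (Finset.mem_insert_self _ _)
    have hE2 := h2 c (Finset.mem_insert_self _ _) c (Finset.mem_insert_self _ _)
    set a : Finset V → ℂ := fun T => if e T ∈ Φ T ∨ T.card ≠ i then 0 else a0 T with ha
    have haΦ : ∀ T, x T - a T • e T ∈ Φ T := by
      intro T
      simp only [ha]
      split_ifs with h
      · rcases h with h | h
        · have := (Φ T).add_mem (ha0 T) ((Φ T).smul_mem (a0 T) h)
          simpa using this
        · rw [hx T h]; simp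
      · exact ha0 T
    have haD : ∀ T, a T ≠ 0 → e T ∉ Φ T ∧ T.card = i ∧ (E c T ∨ P T) := by
      intro T hT
      simp only [ha] at hT
      split_ifs at hT with h
      · exact absurd rfl hT
      · push Not at h
        refine ⟨h.1, h.2, ?_⟩
        obtain ⟨c', hc', h'⟩ := ha0' T hT
        rcases Finset.mem_insert.mp hc' with rfl | hc'
        · exact Or.inl h'
        · exact Or.inr ⟨c', hc', h'⟩
    have hacyc : ∀ T, e T ∉ Φ T → ∑ t ∈ Tᶜ, csgn t T * a (insert t T) = 0 := by
      intro T hT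
      by_contra hne
      apply hT
      have key : K.d x T - (∑ t ∈ Tᶜ, csgn t T * a (insert t T)) • e T ∈ Φ T := by
        rw [Cube.d, Finset.sum_smul, ← Finset.sum_sub_distrib]
        apply Submodule.sum_mem
        intro t _
        rw [mul_smul, ← smul_sub]
        apply Submodule.smul_mem
        rw [K.q_of x (Finset.subset_insert t T)]
        by_cases h0 : a (insert t T) = 0
        · have := haΦ (insert t T)
          rw [h0, zero_smul, sub_zero] at this
          rw [h0, zero_smul, sub_zero]
          exact hΦ _ _ _ _ this
        · have hD := (haD _ h0).1
          have hne0 : e (insert t T) ≠ 0 := fun h => hD (h ▸ (Φ _).zero_mem)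
          rw [← he T _ (Finset.subset_insert t T) hne0, ← map_smul, ← map_sub]
          exact hΦ _ _ _ _ (haΦ _)
      rw [hcyc, zero_sub, ← neg_smul] at key
      exact (Submodule.smul_mem_iff _ (neg_ne_zero.mpr hne)).mp key
    set b : Finset V → ℂ := fun U =>
      if c ∈ U ∧ ¬ P U then csgn c (U.erase c) * a (U.erase c) else 0 with hb
    have hbD : ∀ U, b U ≠ 0 → c ∈ U ∧ e U ∉ Φ U ∧ U.card = i + 1 ∧ E c U := by
      intro U hU
      simp only [hb] at hU
      split_ifs at hU with h
      · obtain ⟨hcU, hPU⟩ := h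
        obtain ⟨g1, g2, g3⟩ := haD _ (right_ne_zero_of_mul hU)
        have hins : insert c (U.erase c) = U := Finset.insert_erase hcU
        have hnot : c ∉ U.erase c := Finset.notMem_erase c U
        have hEc : E c (U.erase c) := by
          rcases g3 with g3 | g3
          · exact g3
          · exact absurd (hins ▸ hPins _ hnot g3) hPU
        refine ⟨hcU, ?_, ?_, ?_⟩
        · rw [hE3 _ hnot hEc, hins] at g1; exact g1
        · rw [← g2, Finset.card_erase_add_one hcU]
        · have := hE2 _ hnot hEc
          rwa [hins] at this
      · exact absurd rfl hU
    set y : ∀ T, K.F T := fun U => b U • e U with hy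
    have hysupp : K.Supp (i + 1) y := by
      intro U hU
      simp only [hy]
      have : b U = 0 := by
        by_contra h
        exact hU (hbD U h).2.2.1
      rw [this, zero_smul]
    set β : Finset V → ℂ := fun T => ∑ t ∈ Tᶜ, csgn t T * b (insert t T) with hβ
    have hdy : ∀ T, K.d y T = β T • e T := by
      intro T
      simp only [hβ]
      rw [Cube.d, Finset.sum_smul]
      apply Finset.sum_congr rfl
      intro t _
      rw [K.q_of y (Finset.subset_insert t T), mul_smul]
      congr 1
      simp only [hy]
      rw [map_smul]
      by_cases h0 : b (insert t T) = 0
      · rw [h0, zero_smul, zero_smul]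
      · have hD := (hbD _ h0).2.1
        have hne0 : e (insert t T) ≠ 0 := fun h => hD (h ▸ (Φ _).zero_mem)
        rw [he T _ (Finset.subset_insert t T) hne0]
    have hmain : ∀ T, e T ∉ Φ T → ¬ P T → a T = β T := by
      intro T hT hPT
      have hPt : ∀ t, ¬ P (insert t T) := fun t h => hPT (hPmono _ _ (Finset.subset_insert t T) h)
      by_cases hcT : c ∈ T
      · obtain ⟨T', hcT', rfl⟩ : ∃ T', c ∉ T' ∧ T = insert c T' :=
          ⟨T.erase c, Finset.notMem_erase c T, (Finset.insert_erase hcT).symm⟩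
        by_cases hE : E c T'
        · have hT' : e T' ∉ Φ T' := by rw [hE3 T' hcT' hE]; exact hT
          have hz := hacyc T' hT'
          have hcompl : T'ᶜ = insert c (insert c T')ᶜ := by
            ext t
            simp only [Finset.mem_compl, Finset.mem_insert, not_or]
            by_cases htc : t = c
            · subst htc; simp [hcT']
            · simp [htc]
          rw [hcompl, Finset.sum_insert (by simp)] at hz
          have hβT : β (insert c T') =
              - csgn c T' * ∑ t ∈ (insert c T')ᶜ, csgn t T' * a (insert t T') := by
            simp only [hβ]
            rw [Finset.mul_sum]
            apply Finset.sum_congr rfl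
            intro t ht
            simp only [Finset.mem_compl, Finset.mem_insert, not_or] at ht
            have hb' : b (insert t (insert c T')) = csgn c (insert t T') * a (insert t T') := by
              simp only [hb]
              rw [if_pos ⟨by simp, hPt t⟩, Finset.insert_comm,
                Finset.erase_insert (by simp [hcT', Ne.symm ht.1])]
            rw [hb']
            have hs := csgn_swap c t T' hcT' ht.2 (Ne.symm ht.1)
            have hs2 := csgn_sq c T'
            have hs3 : csgn t (insert c T') = - csgn c T' * (csgn t T' * csgn c (insert t T')) := by
              linear_combination (csgn c T') * hs - csgn t (insert c T') * hs2
            rw [hs3]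
            have hs4 := csgn_sq c (insert t T')
            linear_combination (-csgn c T' * csgn t T' * a (insert t T')) * hs4
          rw [hβT]
          have hs2 := csgn_sq c T'
          linear_combination (csgn c T') * hz - a (insert c T') * hs2
        · have ha0 : a (insert c T') = 0 := by
            by_contra h
            rcases (haD _ h).2.2 with h' | h'
            · exact hE (hE1 _ _ (Finset.subset_insert _ _) h')
            · exact hPT h'
          rw [ha0]
          symm
          apply Finset.sum_eq_zero
          intro t _
          have : b (insert t (insert c T')) = 0 := by
            by_contra h
            exact hE (hE1 _ _ ((Finset.subset_insert _ _).trans (Finset.subset_insert _ _))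
              (hbD _ h).2.2.2)
          rw [this, mul_zero]
      · simp only [hβ]
        rw [Finset.sum_eq_single_of_mem c (by simpa using hcT)]
        · have hb' : b (insert c T) = csgn c T * a T := by
            simp only [hb]
            rw [if_pos ⟨by simp, hPt c⟩, Finset.erase_insert hcT]
          rw [hb', ← mul_assoc, csgn_sq, one_mul]
        · intro t _ htc
          have hb' : b (insert t T) = 0 := by
            simp only [hb]
            rw [if_neg]
            rintro ⟨h, _⟩
            rcases Finset.mem_insert.mp h with h | h
            · exact htc h.symm
            · exact hcT h
          rw [hb', mul_zero]
    obtain ⟨y', hy's, hy'⟩ := ih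
      (fun c' hc' => h1 c' (Finset.mem_insert_of_mem hc'))
      (fun c' hc' c'' hc'' => h2 c' (Finset.mem_insert_of_mem hc') c'' (Finset.mem_insert_of_mem hc''))
      (fun c' hc' => h3 c' (Finset.mem_insert_of_mem hc'))
      (fun T => x T - K.d y T)
      (by
        intro T hT
        simp only
        rw [hx T hT, K.d_supp i y hysupp T hT, sub_zero])
      (by
        intro T
        rw [K.d_sub, hcyc, K.d_d, sub_zero])
      (by
        intro T
        refine ⟨if P T then a T - β T else 0, ?_, ?_⟩
        · rw [hdy]
          by_cases hPT : P T
          · rw [if_pos hPT]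
            have := haΦ T
            convert this using 1
            rw [sub_smul]; abel
          · rw [if_neg hPT, zero_smul, sub_zero]
            by_cases hD : e T ∈ Φ T
            · have := (Φ T).add_mem (haΦ T) ((Φ T).smul_mem (a T - β T) hD)
              convert this using 1
              rw [sub_smul]; abel
            · rw [← hmain T hD hPT]
              exact haΦ T
        · intro h
          by_contra hPT
          exact h (if_neg hPT))
    refine ⟨fun T => y T + y' T, ?_, ?_⟩
    · intro T hT
      simp only
      rw [hysupp T hT, hy's T hT, add_zero]
    · intro T
      rw [K.d_add, ← sub_sub]
      exact hy' T

lemma Cube.HV_of_filtration (K : Cube V) (i : ℕ) {W : Type} [Fintype W] [LinearOrder W]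
    (e : W → ∀ T, K.F T)
    (he : ∀ w (T U : Finset V) (h : T ⊆ U), e w U ≠ 0 → K.r h (e w U) = e w T)
    (hspan : ∀ T, Submodule.span ℂ (Set.range (fun w => e w T)) = ⊤)
    (hW : ∀ w, ∃ (E : V → Finset V → Prop) (C : Finset V),
      (∀ c ∈ C, ∀ T U : Finset V, T ⊆ U → E c U → E c T) ∧
      (∀ c ∈ C, ∀ c' ∈ C, ∀ T : Finset V, c ∉ T → E c' T → E c' (insert c T)) ∧
      (∀ c ∈ C, ∀ T : Finset V, c ∉ T → E c T →
        (e w T ∈ Submodule.span ℂ ((fun v => e v T) '' Set.Iio w) ↔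
          e w (insert c T) ∈ Submodule.span ℂ ((fun v => e v (insert c T)) '' Set.Iio w))) ∧
      (∀ T : Finset V, T.card = i → e w T ∉ Submodule.span ℂ ((fun v => e v T) '' Set.Iio w) →
        ∃ c ∈ C, E c T)) :
    K.HV i := by
  classical
  have main : ∀ s : Finset W, IsLowerSet (s : Set W) →
      ∀ x : ∀ T, K.F T, K.Supp i x → (∀ T, K.d x T = 0) →
      (∀ T, x T ∈ Submodule.span ℂ ((fun v => e v T) '' (s : Set W))) →
      ∃ y : ∀ T, K.F T, K.Supp (i + 1) y ∧ ∀ T, K.d y T = x T := by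
    intro s
    induction s using Finset.induction_on_max with
    | empty =>
      intro _ x _ _ hx
      refine ⟨fun T => 0, fun T _ => rfl, fun T => ?_⟩
      have hd : K.d (fun T => 0) T = 0 := by
        have := K.d_sub x x T
        simpa using this
      have := hx T
      simp at this
      rw [hd, this]
    | insert w s hws ih =>
      intro hlow x hx hcyc hxs
      have hs : (s : Set W) = Set.Iio w := by
        ext v
        constructor
        · intro hv; exact hws v hv
        · intro hv
          have : v ∈ ((insert w s : Finset W) : Set W) :=
            hlow (le_of_lt hv) (by simp)
          simp at this
          rcases this with h | h
          · exact absurd hv (by simp [h])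
          · exact h
      obtain ⟨E, C, h1, h2, h3, h4⟩ := hW w
      obtain ⟨y, hy, hxy⟩ := K.step i (fun T => Submodule.span ℂ ((fun v => e v T) '' Set.Iio w))
        (by
          intro T U h z hz
          have : Submodule.map (K.r h) (Submodule.span ℂ ((fun v => e v U) '' Set.Iio w)) ≤
              Submodule.span ℂ ((fun v => e v T) '' Set.Iio w) := by
            rw [Submodule.map_span_le]
            rintro _ ⟨v, hv, rfl⟩
            by_cases h0 : e v U = 0
            · simp [h0]
            · simp only
              rw [he v T U h h0]
              exact Submodule.subset_span ⟨v, hv, rfl⟩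
          exact this ⟨z, hz, rfl⟩)
        (e w) (he w) E C h1 h2 h3 x hx hcyc
        (by
          intro T
          by_cases hT : T.card = i
          · by_cases hD : e w T ∈ Submodule.span ℂ ((fun v => e v T) '' Set.Iio w)
            · refine ⟨0, ?_, fun h => absurd rfl h⟩
              have hx' := hxs T
              rw [zero_smul, sub_zero]
              refine (Submodule.span_le.mpr ?_) hx'
              rintro _ ⟨v, hv, rfl⟩
              simp only [Finset.coe_insert, Set.mem_insert_iff] at hv
              rcases hv with rfl | hv
              · exact hD
              · exact Submodule.subset_span ⟨v, hs ▸ hv, rfl⟩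
            · have hx' := hxs T
              rw [Finset.coe_insert, Set.image_insert_eq, Submodule.mem_span_insert] at hx'
              obtain ⟨a, z, hz, hxz⟩ := hx'
              refine ⟨a, ?_, fun _ => h4 T hT hD⟩
              rw [hxz, add_sub_cancel_left, ← hs]
              exact hz
          · refine ⟨0, ?_, fun h => absurd rfl h⟩
            rw [hx T hT]; simp)
      obtain ⟨y', hy', hxy'⟩ := ih (by rw [hs]; exact isLowerSet_Iio w) (fun T => x T - K.d y T)
        (by
          intro T hT
          simp only
          rw [hx T hT, K.d_supp i y hy T hT, sub_zero])
        (by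
          intro T
          rw [K.d_sub, hcyc, K.d_d, sub_zero])
        (by rw [hs]; exact hxy)
      refine ⟨fun T => y T + y' T, ?_, ?_⟩
      · intro T hT
        simp only
        rw [hy T hT, hy' T hT, add_zero]
      · intro T
        rw [K.d_add, hxy']
        abel
  intro x hx hcyc
  apply main Finset.univ (by simpa using isLowerSet_univ) x hx hcyc
  intro T
  rw [Finset.coe_univ, Set.image_univ, hspan]
  trivial

end StepSec

section GapSec

open Classical in
noncomputable def gapSet {m : ℕ} {α : Type} [Fintype α] [LinearOrder α] (f : Fin m → α)
    (C : Finset (Fin m)) : Finset α :=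
  Finset.univ.filter (fun t => (∀ k, f k ≠ t) ∧ ∀ k, (f k < t ↔ k ∈ C))

lemma mem_gapSet {m : ℕ} {α : Type} [Fintype α] [LinearOrder α] (f : Fin m → α)
    (C : Finset (Fin m)) (t : α) :
    t ∈ gapSet f C ↔ (∀ k, f k ≠ t) ∧ ∀ k, (f k < t ↔ k ∈ C) := by
  simp [gapSet]

lemma exists_strictMono_of_gap {m : ℕ} {α β : Type} [Fintype α] [LinearOrder α] [Fintype β]
    [LinearOrder β] (f : Fin m → α) (g : Fin m → β) (hpat : ∀ k l, f k < f l ↔ g k < g l)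
    (hgap : ∀ C, (gapSet f C).card ≤ (gapSet g C).card) :
    ∃ φ : α → β, StrictMono φ ∧ ∀ k, φ (f k) = g k := by
  classical
  have hψ : ∀ C, ∃ ψ : {t // t ∈ gapSet f C} → β, StrictMono ψ ∧ ∀ t, ψ t ∈ gapSet g C := by
    intro C
    let i1 := (gapSet f C).orderIsoOfFin rfl
    let i2 := (gapSet g C).orderEmbOfFin rfl
    refine ⟨fun t => i2 (Fin.castLE (hgap C) (i1.symm t)), ?_, ?_⟩
    · intro s t hst
      simpa using hst
    · intro t
      exact Finset.orderEmbOfFin_mem _ _ _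
  choose ψ hψm hψg using hψ
  let κ : α → Finset (Fin m) := fun t => Finset.univ.filter (fun k => f k < t)
  have hκ : ∀ t, (¬ ∃ k, f k = t) → t ∈ gapSet f (κ t) := by
    intro t ht
    rw [mem_gapSet]
    exact ⟨fun k hk => ht ⟨k, hk⟩, fun k => by simp [κ]⟩
  let φ : α → β := fun t => if h : ∃ k, f k = t then g h.choose else ψ (κ t) ⟨t, hκ t h⟩
  have hφf : ∀ k, φ (f k) = g k := by
    intro k
    have h : ∃ l, f l = f k := ⟨k, rfl⟩
    simp only [φ]
    rw [dif_pos h]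
    have h1 := h.choose_spec
    have h2 := hpat h.choose k
    have h3 := hpat k h.choose
    rw [h1] at h2 h3
    simp at h2 h3
    exact le_antisymm h3 h2
  have hφg : ∀ t, (¬ ∃ k, f k = t) → φ t ∈ gapSet g (κ t) := by
    intro t ht
    simp only [φ]
    rw [dif_neg ht]
    exact hψg _ _
  have hA : ∀ t, (¬ ∃ k, f k = t) → ∀ k, (f k < t → g k < φ t) ∧ (t < f k → φ t < g k) := by
    intro t ht k
    have h := hφg t ht
    rw [mem_gapSet] at h
    have h1 := h.1 k
    have h2 := h.2 k
    simp only [κ, Finset.mem_filter, Finset.mem_univ, true_and] at h2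
    refine ⟨h2.mpr, fun h3 => ?_⟩
    rcases lt_trichotomy (g k) (φ t) with h4 | h4 | h4
    · exact absurd (h2.mp h4) h3.not_gt
    · exact absurd h4 h1
    · exact h4
  refine ⟨φ, ?_, hφf⟩
  intro s t hst
  by_cases hs : ∃ k, f k = s
  · obtain ⟨k, rfl⟩ := hs
    rw [hφf]
    by_cases ht : ∃ k, f k = t
    · obtain ⟨l, rfl⟩ := ht
      rw [hφf]
      exact (hpat k l).mp hst
    · exact (hA t ht k).1 hst
  · by_cases ht : ∃ k, f k = t
    · obtain ⟨l, rfl⟩ := ht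
      rw [hφf]
      exact (hA s hs l).2 hst
    · by_cases hk : ∃ k, s < f k ∧ f k < t
      · obtain ⟨k, h1, h2⟩ := hk
        exact ((hA s hs k).2 h1).trans ((hA t ht k).1 h2)
      · have hκe : κ s = κ t := by
          ext k
          simp only [κ, Finset.mem_filter, Finset.mem_univ, true_and]
          refine ⟨fun h => h.trans hst, fun h => ?_⟩
          push Not at hk
          by_contra h'
          push Not at h'
          rcases h'.lt_or_eq with h'' | h''
          · exact absurd h (hk k h'').not_gt
          · exact hs ⟨k, h''.symm⟩
        simp only [φ]
        rw [dif_neg hs, dif_neg ht]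
        have : ∀ (C : Finset (Fin m)) (hC : C = κ s) (h : t ∈ gapSet f C),
            ψ (κ s) ⟨s, hκ s hs⟩ < ψ C ⟨t, h⟩ := by
          intro C hC h
          subst hC
          exact hψm _ hst
        exact this _ hκe.symm _

lemma dickson {Γ : Type} [Finite Γ] (U : Set (Γ → ℕ)) (hU : IsUpperSet U) :
    ∃ A : ℕ, ∀ A' ≥ A, ∀ g : Γ → ℕ, g ∈ U ↔ (fun c => min (g c) A') ∈ U := by
  classical
  have := Fintype.ofFinite Γ
  have hfin : {g | Minimal (· ∈ U) g}.Finite := by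
    exact WellQuasiOrderedLE.finite_of_isAntichain (setOfPred_minimal_antichain _)
  refine ⟨hfin.toFinset.sup (fun g => Finset.univ.sup g), fun A' hA' g => ⟨fun hg => ?_, fun hg => ?_⟩⟩
  · obtain ⟨u, hu, hmin⟩ := exists_minimal_le_of_wellFoundedLT (· ∈ U) g hg
    refine hU (a := u) ?_ hmin.1
    intro c
    simp only
    refine le_min (hu c) ?_
    refine le_trans ?_ hA'
    calc u c ≤ Finset.univ.sup u := Finset.le_sup (Finset.mem_univ c)
      _ ≤ _ := Finset.le_sup (f := fun g => Finset.univ.sup g) (hfin.mem_toFinset.mpr hmin)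
  · exact hU (fun c => min_le_left _ _) hg

end GapSec

section MonSec

noncomputable def fimap (M : FIMod) {α β : Type} [Fintype α] [Fintype β] (f : α → β)
    (hf : Function.Injective f) : M.obj (FIObj.of α) →ₗ[ℂ] M.obj (FIObj.of β) :=
  (M.map (⟨f, hf⟩ : FIObj.of α ⟶ FIObj.of β)).hom

lemma fimap_comp (M : FIMod) {α β γ : Type} [Fintype α] [Fintype β] [Fintype γ] (f : α → β)
    (hf : Function.Injective f) (g : β → γ) (hg : Function.Injective g) (x : M.obj (FIObj.of α)) :
    fimap M g hg (fimap M f hf x) = fimap M (g ∘ f) (hg.comp hf) x := by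
  have := M.map_comp (⟨f, hf⟩ : FIObj.of α ⟶ FIObj.of β) (⟨g, hg⟩ : FIObj.of β ⟶ FIObj.of γ)
  have h2 := congrArg (fun h => h.hom x) this
  exact h2.symm

lemma fimap_congr (M : FIMod) {α β : Type} [Fintype α] [Fintype β] {f g : α → β}
    (h : f = g) (hf : Function.Injective f) (hg : Function.Injective g) (x : M.obj (FIObj.of α)) :
    fimap M f hf x = fimap M g hg x := by
  subst h; rfl

lemma fimap_id (M : FIMod) {α : Type} [Fintype α] (x : M.obj (FIObj.of α)) :
    fimap M id Function.injective_id x = x := by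
  have := M.map_id (FIObj.of α)
  have h2 := congrArg (fun h => h.hom x) this
  exact h2

noncomputable def cubeOf (M : FIMod) (n : ℕ) : Cube (Fin n) where
  F T := M.obj (FIObj.of {x : Fin n // x ∉ T})
  acg _ := inferInstance
  mod _ := inferInstance
  r {T U} h := fimap M (fun x : {x : Fin n // x ∉ U} => (⟨x.1, fun hx => x.2 (h hx)⟩ : {x : Fin n // x ∉ T}))
    (fun x y hxy => Subtype.ext (congrArg (fun z : {x : Fin n // x ∉ T} => z.1) hxy))
  r_comp h h' z := by
    exact fimap_comp M _ _ _ _ z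

abbrev Wt {k : ℕ} (m : Fin k → ℕ) (α : Type) : Type := Σₗ (j : Fin k), Lex (Fin (m j) → α)

def Wt.mk {k : ℕ} {m : Fin k → ℕ} {α : Type} (j : Fin k) (f : Fin (m j) → α) : Wt m α :=
  toLex ⟨j, toLex f⟩

lemma Wt.lt_iff {k : ℕ} {m : Fin k → ℕ} {α : Type} [LinearOrder α] (j : Fin k) (f : Fin (m j) → α)
    (j' : Fin k) (f' : Fin (m j') → α) :
    Wt.mk j f < Wt.mk j' f' ↔ j < j' ∨ ∃ h : j = j', ∃ l : Fin (m j),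
      (∀ l' < l, f l' = f' (Fin.cast (by rw [h]) l')) ∧ f l < f' (Fin.cast (by rw [h]) l) := by
  rw [Wt.mk, Wt.mk, Sigma.Lex.lt_def]
  apply or_congr Iff.rfl
  constructor
  · rintro ⟨h, h'⟩
    change j = j' at h
    subst h
    exact ⟨rfl, h'⟩
  · rintro ⟨h, h'⟩
    subst h
    exact ⟨rfl, h'⟩

lemma Wt.lt_comp {k : ℕ} {m : Fin k → ℕ} {α β : Type} [LinearOrder α] [LinearOrder β]
    (φ : α → β) (hφ : StrictMono φ) (j : Fin k) (f : Fin (m j) → α)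
    (j' : Fin k) (f' : Fin (m j') → α) :
    Wt.mk j (φ ∘ f) < Wt.mk j' (φ ∘ f') ↔ Wt.mk j f < Wt.mk j' f' := by
  rw [Wt.lt_iff, Wt.lt_iff]
  simp [hφ.lt_iff_lt, hφ.injective.eq_iff]

variable (M : FIMod) {k : ℕ} {m : Fin k → ℕ} (g : ∀ j, M.obj (FIObj.of (Fin (m j))))

open Classical in
noncomputable def ev {α : Type} [Fintype α] (w : Wt m α) : M.obj (FIObj.of α) :=
  if h : Function.Injective (ofLex (ofLex w).2) then fimap M _ h (g (ofLex w).1) else 0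

lemma ev_mk {α : Type} [Fintype α] (j : Fin k) (f : Fin (m j) → α) (hf : Function.Injective f) :
    ev M g (Wt.mk j f) = fimap M f hf (g j) := by
  unfold ev
  exact dif_pos hf

lemma ev_mk_not {α : Type} [Fintype α] (j : Fin k) (f : Fin (m j) → α) (hf : ¬ Function.Injective f) :
    ev M g (Wt.mk j f) = 0 := by
  unfold ev
  exact dif_neg hf

def Nonstd {α : Type} [Fintype α] [LinearOrder α] (w : Wt m α) : Prop :=
  ev M g w ∈ Submodule.span ℂ (ev M g '' Set.Iio w)

lemma ev_map {α β : Type} [Fintype α] [Fintype β] (φ : α → β) (hφ : Function.Injective φ)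
    (j : Fin k) (f : Fin (m j) → α) :
    fimap M φ hφ (ev M g (Wt.mk j f)) = ev M g (Wt.mk j (φ ∘ f)) := by
  by_cases hf : Function.Injective f
  · rw [ev_mk M g j f hf, fimap_comp, ev_mk]
  · rw [ev_mk_not M g j f hf, ev_mk_not, map_zero]
    exact fun h => hf (Function.Injective.of_comp h)

lemma Nonstd.map {α β : Type} [Fintype α] [LinearOrder α] [Fintype β] [LinearOrder β]
    (φ : α → β) (hφ : StrictMono φ) (j : Fin k) (f : Fin (m j) → α)
    (h : Nonstd M g (Wt.mk j f)) : Nonstd M g (Wt.mk j (φ ∘ f)) := by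
  unfold Nonstd at h ⊢
  rw [← ev_map M g φ hφ.injective]
  have : Submodule.map (fimap M φ hφ.injective) (Submodule.span ℂ (ev M g '' Set.Iio (Wt.mk j f))) ≤
      Submodule.span ℂ (ev M g '' Set.Iio (Wt.mk j (φ ∘ f))) := by
    rw [Submodule.map_span_le]
    rintro _ ⟨⟨j', f'⟩, hv, rfl⟩
    apply Submodule.subset_span
    refine ⟨Wt.mk j' (φ ∘ f'), ?_, (ev_map M g φ hφ.injective j' f').symm⟩
    exact (Wt.lt_comp φ hφ j' f' j f).mpr hv
  exact this ⟨_, h, rfl⟩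

lemma exists_threshold : ∃ A : ℕ, ∀ (j : Fin k) (α β : Type) [Fintype α] [LinearOrder α] [Fintype β]
    [LinearOrder β] (f : Fin (m j) → α) (f' : Fin (m j) → β),
    (∀ k l, f k < f l ↔ f' k < f' l) →
    (∀ C, min (gapSet f C).card A = min (gapSet f' C).card A) →
    (Nonstd M g (Wt.mk j f) ↔ Nonstd M g (Wt.mk j f')) := by
  classical
  have key : ∀ (p : Σ j : Fin k, Fin (m j) → Fin (m j) → Prop), ∃ A : ℕ, ∀ A' ≥ A,
      ∀ (α β : Type) [Fintype α] [LinearOrder α] [Fintype β]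
      [LinearOrder β] (f : Fin (m p.1) → α) (f' : Fin (m p.1) → β),
      (∀ k l, f k < f l ↔ p.2 k l) → (∀ k l, f' k < f' l ↔ p.2 k l) →
      (∀ C, min (gapSet f C).card A' = min (gapSet f' C).card A') →
      (Nonstd M g (Wt.mk p.1 f) ↔ Nonstd M g (Wt.mk p.1 f')) := by
    rintro ⟨j, R⟩
    dsimp only
    let U : Set (Finset (Fin (m j)) → ℕ) := {γ | ∃ (α : Type) (_ : Fintype α) (_ : LinearOrder α)
      (f : Fin (m j) → α), (∀ k l, f k < f l ↔ R k l) ∧ (∀ C, (gapSet f C).card ≤ γ C) ∧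
      Nonstd M g (Wt.mk j f)}
    have hU : IsUpperSet U := by
      rintro γ γ' hle ⟨α, _, _, f, h1, h2, h3⟩
      exact ⟨α, _, _, f, h1, fun C => (h2 C).trans (hle C), h3⟩
    have hUiff : ∀ (α : Type) [Fintype α] [LinearOrder α] (f : Fin (m j) → α),
        (∀ k l, f k < f l ↔ R k l) →
        (Nonstd M g (Wt.mk j f) ↔ (fun C => (gapSet f C).card) ∈ U) := by
      intro α _ _ f hf
      constructor
      · intro h
        exact ⟨α, _, _, f, hf, fun C => le_rfl, h⟩
      · rintro ⟨β, _, _, f', h1, h2, h3⟩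
        obtain ⟨φ, hφ, hφf⟩ := exists_strictMono_of_gap f' f
          (fun k l => (h1 k l).trans (hf k l).symm) h2
        have := h3.map M g φ hφ
        have e : φ ∘ f' = f := funext hφf
        rwa [e] at this
    obtain ⟨A, hA⟩ := dickson U hU
    refine ⟨A, fun A' hA' α β _ _ _ _ f f' hf hf' hgap => ?_⟩
    rw [hUiff α f hf, hUiff β f' hf', hA A' hA', hA A' hA' (fun C => (gapSet f' C).card)]
    simp only [hgap]
  choose A hA using key
  refine ⟨Finset.univ.sup A, ?_⟩
  intro j α β _ _ _ _ f f' hpat hgap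
  exact hA ⟨j, fun k l => f k < f l⟩ _ (Finset.le_sup (Finset.mem_univ _)) α β f f'
    (fun k l => Iff.rfl) (fun k l => (hpat k l).symm) hgap

end MonSec

section RegSec

variable (M : FIMod) {k : ℕ} {m : Fin k → ℕ} (g : ∀ j, M.obj (FIObj.of (Fin (m j))))

open Classical in
noncomputable def eT {n : ℕ} (w : Wt m (Fin n)) (T : Finset (Fin n)) :
    M.obj (FIObj.of {x : Fin n // x ∉ T}) :=
  if h : ∀ l, (ofLex (ofLex w).2) l ∉ T then
    ev M g (Wt.mk (ofLex w).1 (fun l => (⟨(ofLex (ofLex w).2) l, h l⟩ : {x : Fin n // x ∉ T})))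
  else 0

lemma eT_mk {n : ℕ} (T : Finset (Fin n)) (j : Fin k) (f : Fin (m j) → {x : Fin n // x ∉ T}) :
    eT M g (Wt.mk j (Subtype.val ∘ f)) T = ev M g (Wt.mk j f) := by
  unfold eT
  exact dif_pos (fun l => (f l).2)

lemma eT_mk_not {n : ℕ} (T : Finset (Fin n)) (j : Fin k) (f : Fin (m j) → Fin n)
    (h : ¬ ∀ l, f l ∉ T) :
    eT M g (Wt.mk j f) T = 0 := by
  unfold eT
  exact dif_neg h

lemma Wt.exists_mk {α : Type} (w : Wt m α) : ∃ j f, w = Wt.mk j f := ⟨w.1, w.2, rfl⟩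

lemma exists_corestrict {ι : Type} {n : ℕ} (T : Finset (Fin n)) (f : ι → Fin n) (h : ∀ l, f l ∉ T) :
    ∃ f' : ι → {x : Fin n // x ∉ T}, f = Subtype.val ∘ f' :=
  ⟨fun l => ⟨f l, h l⟩, rfl⟩

lemma eT_r {n : ℕ} (w : Wt m (Fin n)) (T U : Finset (Fin n)) (h : T ⊆ U)
    (hw : eT M g w U ≠ 0) : (cubeOf M n).r h (eT M g w U) = eT M g w T := by
  obtain ⟨j, f, rfl⟩ := w.exists_mk
  by_cases hf : ∀ l, f l ∉ U
  · obtain ⟨f', rfl⟩ := exists_corestrict U f hf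
    rw [eT_mk]
    have : (Subtype.val ∘ f' : Fin (m j) → Fin n) = Subtype.val ∘
      (fun x : {x : Fin n // x ∉ U} => (⟨x.1, fun hx => x.2 (h hx)⟩ : {x : Fin n // x ∉ T})) ∘ f' := rfl
    rw [this, eT_mk]
    exact ev_map M g _ _ j f'
  · exact absurd (eT_mk_not M g U j f hf) hw

lemma eT_span {n : ℕ} (T : Finset (Fin n)) (j : Fin k) (f : Fin (m j) → {x : Fin n // x ∉ T}) :
    Submodule.span ℂ ((fun v => eT M g v T) '' Set.Iio (Wt.mk j (Subtype.val ∘ f))) =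
    Submodule.span ℂ (ev M g '' Set.Iio (Wt.mk j f)) := by
  have hval : StrictMono (Subtype.val : {x : Fin n // x ∉ T} → Fin n) := fun _ _ h => h
  apply le_antisymm
  · rw [Submodule.span_le]
    rintro _ ⟨v, hv, rfl⟩
    obtain ⟨j', f', rfl⟩ := v.exists_mk
    by_cases hf : ∀ l, f' l ∉ T
    · obtain ⟨f', rfl⟩ := exists_corestrict T f' hf
      simp only
      rw [eT_mk]
      exact Submodule.subset_span ⟨_, (Wt.lt_comp _ hval _ _ _ _).mp hv, rfl⟩
    · simp only
      rw [eT_mk_not M g T j' f' hf]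
      exact Submodule.zero_mem _
  · rw [Submodule.span_le]
    rintro _ ⟨v, hv, rfl⟩
    obtain ⟨j', f', rfl⟩ := v.exists_mk
    rw [← eT_mk]
    exact Submodule.subset_span ⟨_, (Wt.lt_comp _ hval _ _ _ _).mpr hv, rfl⟩

lemma eT_span_top {n : ℕ} (T : Finset (Fin n))
    (hg : Submodule.span ℂ (Set.range (ev M g : Wt m {x : Fin n // x ∉ T} → _)) = ⊤) :
    Submodule.span ℂ (Set.range (fun w => eT M g w T)) = ⊤ := by
  rw [eq_top_iff, ← hg, Submodule.span_le]
  rintro _ ⟨v, rfl⟩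
  obtain ⟨j', f', rfl⟩ := v.exists_mk
  rw [← eT_mk]
  exact Submodule.subset_span ⟨_, rfl⟩

lemma eT_nonstd {n : ℕ} (T : Finset (Fin n)) (j : Fin k) (f : Fin (m j) → {x : Fin n // x ∉ T}) :
    eT M g (Wt.mk j (Subtype.val ∘ f)) T ∈
      Submodule.span ℂ ((fun v => eT M g v T) '' Set.Iio (Wt.mk j (Subtype.val ∘ f))) ↔
    Nonstd M g (Wt.mk j f) := by
  rw [eT_span, eT_mk]; rfl

lemma gapSet_card {n p : ℕ} (T : Finset (Fin n)) (f : Fin p → {x : Fin n // x ∉ T})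
    (C : Finset (Fin p)) :
    (gapSet f C).card = (gapSet (Subtype.val ∘ f) C \ T).card := by
  classical
  rw [← Finset.card_map (Function.Embedding.subtype (fun x => x ∉ T))]
  congr 1
  ext t
  simp only [Finset.mem_map, mem_gapSet, Function.Embedding.subtype_apply, Finset.mem_sdiff,
    Function.comp]
  constructor
  · rintro ⟨a, ⟨h1, h2⟩, rfl⟩
    exact ⟨⟨fun l h => h1 l (Subtype.ext h), h2⟩, a.2⟩
  · rintro ⟨⟨h1, h2⟩, h3⟩
    exact ⟨⟨t, h3⟩, ⟨fun l h => h1 l (congrArg Subtype.val h), h2⟩, rfl⟩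

theorem HV_of_gens
    (hg : ∀ (α : Type) [Fintype α], Submodule.span ℂ (Set.range (ev M g : Wt m α → _)) = ⊤) :
    ∃ c : ℕ, ∀ n i, c + i < n → (cubeOf M n).HV i := by
  classical
  obtain ⟨A, hA⟩ := exists_threshold M g
  refine ⟨Finset.univ.sup (fun j => m j + 2 ^ m j * A), fun n i hni => ?_⟩
  have : Fintype (Wt m (Fin n)) := by
    unfold Wt Lex
    infer_instance
  refine Cube.HV_of_filtration (cubeOf M n) i (W := Wt m (Fin n)) (eT M g) ?_ ?_ ?_
  · intro w T U h hw
    exact eT_r M g w T U h hw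
  · intro T
    exact eT_span_top M g T (hg _)
  · intro w
    obtain ⟨j, f, rfl⟩ := w.exists_mk
    let κ : Fin n → Finset (Fin (m j)) := fun t => Finset.univ.filter (fun l => f l < t)
    have hκ : ∀ t, (∀ l, f l ≠ t) → t ∈ gapSet f (κ t) := by
      intro t ht
      rw [mem_gapSet]
      exact ⟨ht, fun l => by simp [κ]⟩
    have hκ' : ∀ t C, t ∈ gapSet f C → C = κ t := by
      intro t C ht
      rw [mem_gapSet] at ht
      ext l
      simp [κ, ht.2]
    refine ⟨fun c T => A ≤ (gapSet f (κ c) \ insert c T).card,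
      Finset.univ.filter (fun c => (∀ l, f l ≠ c) ∧ ∀ s ∈ gapSet f (κ c), s ≤ c), ?_, ?_, ?_, ?_⟩
    · intro c _ T U hTU hE
      refine le_trans hE (Finset.card_le_card ?_)
      exact Finset.sdiff_subset_sdiff le_rfl (Finset.insert_subset_insert _ hTU)
    · intro c hc c' hc' T hcT hE
      simp only [Finset.mem_filter, Finset.mem_univ, true_and] at hc hc'
      refine le_trans hE (Finset.card_le_card ?_)
      intro t ht
      simp only [Finset.mem_sdiff, Finset.mem_insert, not_or] at ht ⊢
      refine ⟨ht.1, ht.2.1, ?_, ht.2.2⟩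
      rintro rfl
      have h1 := hc'.2 t ht.1
      have h2 := hκ' _ _ ht.1
      have h3 := hc.2 c' (h2 ▸ hκ c' hc'.1)
      exact ht.2.1 (le_antisymm h1 h3)
    · intro c hc T hcT hE
      simp only [Finset.mem_filter, Finset.mem_univ, true_and] at hc
      by_cases hf : ∀ l, f l ∉ T
      · have hf2 : ∀ l, f l ∉ insert c T := by
          intro l h
          rcases Finset.mem_insert.mp h with h | h
          · exact hc.1 l h
          · exact hf l h
        obtain ⟨f1, hf1⟩ := exists_corestrict T f hf
        obtain ⟨f2, hf2⟩ := exists_corestrict (insert c T) f hf2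
        have e1 := eT_nonstd M g T j f1
        have e2 := eT_nonstd M g (insert c T) j f2
        rw [← hf1] at e1
        rw [← hf2] at e2
        refine e1.trans (Iff.trans ?_ e2.symm)
        apply hA
        · intro a b
          have ha1 : ∀ a, (f1 a).1 = f a := fun a => by rw [hf1]; rfl
          have ha2 : ∀ a, (f2 a).1 = f a := fun a => by rw [hf2]; rfl
          rw [← Subtype.coe_lt_coe, ← Subtype.coe_lt_coe, ha1, ha1, ha2, ha2]
        · intro C
          rw [gapSet_card, gapSet_card, ← hf1, ← hf2]
          by_cases hcC : c ∈ gapSet f C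
          · have := hκ' _ _ hcC
            subst this
            have hle : (gapSet f (κ c) \ insert c T).card ≤ (gapSet f (κ c) \ T).card :=
              Finset.card_le_card (Finset.sdiff_subset_sdiff le_rfl (Finset.subset_insert _ _))
            rw [min_eq_right hE, min_eq_right (hE.trans hle)]
          · congr 2
            ext t
            simp only [Finset.mem_sdiff, Finset.mem_insert, not_or]
            constructor
            · rintro ⟨h1, h2⟩
              exact ⟨h1, fun h => hcC (h ▸ h1), h2⟩
            · rintro ⟨h1, _, h2⟩
              exact ⟨h1, h2⟩
      · rw [eT_mk_not M g T j f hf, eT_mk_not M g (insert c T) j f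
          (fun h => hf (fun l hl => h l (Finset.mem_insert_of_mem hl)))]
        exact iff_of_true (Submodule.zero_mem _) (Submodule.zero_mem _)
    · intro T hT _
      by_contra hno
      push Not at hno
      have hbound : ∀ C, (gapSet f C \ T).card ≤ A := by
        intro C
        rcases (gapSet f C).eq_empty_or_nonempty with h0 | h0
        · rw [h0]; simp
        · have hmem := (gapSet f C).max'_mem h0
          set c := (gapSet f C).max' h0 with hcdef
          have hC := hκ' _ _ hmem
          have h1 := hno c (by
            simp only [Finset.mem_filter, Finset.mem_univ, true_and]
            refine ⟨((mem_gapSet _ _ _).mp hmem).1, fun s hs => ?_⟩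
            rw [← hC] at hs
            exact Finset.le_max' _ _ hs)
          rw [← hC] at h1
          have h2 : (gapSet f C \ T) ⊆ insert c (gapSet f C \ insert c T) := by
            intro t ht
            simp only [Finset.mem_sdiff, Finset.mem_insert, not_or] at ht ⊢
            by_cases htc : t = c
            · exact Or.inl htc
            · exact Or.inr ⟨ht.1, htc, ht.2⟩
          have h3 := Finset.card_le_card h2
          have h4 := Finset.card_insert_le c (gapSet f C \ insert c T)
          omega
      have hcov : (Finset.univ : Finset (Fin n)) ⊆
          T ∪ (Finset.univ.image f ∪ Finset.univ.biUnion (fun C => gapSet f C \ T)) := by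
        intro t _
        simp only [Finset.mem_union, Finset.mem_image, Finset.mem_univ, true_and,
          Finset.mem_biUnion, Finset.mem_sdiff]
        by_cases h1 : t ∈ T
        · exact Or.inl h1
        · by_cases h2 : ∃ l, f l = t
          · exact Or.inr (Or.inl h2)
          · push Not at h2
            exact Or.inr (Or.inr ⟨κ t, hκ t h2, h1⟩)
      have c1 := Finset.card_le_card hcov
      have c2 := Finset.card_union_le T
        (Finset.univ.image f ∪ Finset.univ.biUnion (fun C => gapSet f C \ T))
      have c3 := Finset.card_union_le (Finset.univ.image f)
        (Finset.univ.biUnion (fun C => gapSet f C \ T))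
      have c4 : (Finset.univ.image f).card ≤ m j := by
        simpa using Finset.card_image_le (s := Finset.univ) (f := f)
      have c5 : (Finset.univ.biUnion (fun C => gapSet f C \ T)).card ≤ 2 ^ m j * A := by
        refine (Finset.card_biUnion_le_card_mul _ _ A (fun C _ => hbound C)).trans ?_
        simp
      have c6 : m j + 2 ^ m j * A ≤ Finset.univ.sup (fun j => m j + 2 ^ m j * A) :=
        Finset.le_sup (f := fun j => m j + 2 ^ m j * A) (Finset.mem_univ j)
      simp only [Finset.card_univ, Fintype.card_fin] at c1
      omega

end RegSec

section FreeSec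

variable {k : ℕ} (m : Fin k → ℕ)

noncomputable def freeFI : FIMod where
  obj S := ModuleCat.of ℂ ((Σ j, (FIObj.of (Fin (m j)) ⟶ S)) →₀ ℂ)
  map {S T} f := ModuleCat.ofHom (Finsupp.lmapDomain ℂ ℂ
    (fun p : (Σ j, (FIObj.of (Fin (m j)) ⟶ S)) => (⟨p.1, p.2 ≫ f⟩ : Σ j, (FIObj.of (Fin (m j)) ⟶ T))))
  map_id S := by
    ext p
    simp
  map_comp f g := by
    ext p
    simp

noncomputable def freeGen (j : Fin k) : (freeFI m).obj (FIObj.of (Fin (m j))) :=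
  (Finsupp.single ⟨j, 𝟙 _⟩ 1 : (Σ j', (FIObj.of (Fin (m j')) ⟶ FIObj.of (Fin (m j)))) →₀ ℂ)

lemma freeFI_map_gen (j : Fin k) {S : FIObj} (f : FIObj.of (Fin (m j)) ⟶ S) :
    ((freeFI m).map f).hom (freeGen m j) =
      (Finsupp.single ⟨j, f⟩ 1 : (Σ j, (FIObj.of (Fin (m j)) ⟶ S)) →₀ ℂ) := by
  refine (Finsupp.mapDomain_single).trans ?_
  simp

variable {m} in
noncomputable def freeDesc (M : FIMod) (g : ∀ j, M.obj (FIObj.of (Fin (m j)))) : freeFI m ⟶ M where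
  app S := ModuleCat.ofHom (Finsupp.linearCombination ℂ
    (fun p : (Σ j, (FIObj.of (Fin (m j)) ⟶ S)) => (M.map p.2).hom (g p.1)))
  naturality S T f := by
    apply ModuleCat.hom_ext
    change (Finsupp.linearCombination ℂ
      (fun p : (Σ j, (FIObj.of (Fin (m j)) ⟶ T)) => (M.map p.2).hom (g p.1))) ∘ₗ
      (Finsupp.lmapDomain ℂ ℂ (fun p : (Σ j, (FIObj.of (Fin (m j)) ⟶ S)) =>
        (⟨p.1, p.2 ≫ f⟩ : Σ j, (FIObj.of (Fin (m j)) ⟶ T)))) =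
      (M.map f).hom ∘ₗ (Finsupp.linearCombination ℂ
      (fun p : (Σ j, (FIObj.of (Fin (m j)) ⟶ S)) => (M.map p.2).hom (g p.1)))
    refine Finsupp.lhom_ext fun p a => ?_
    simp

lemma freeDesc_gen (M : FIMod) (g : ∀ j, M.obj (FIObj.of (Fin (m j)))) (j : Fin k) {S : FIObj}
    (f : FIObj.of (Fin (m j)) ⟶ S) :
    ((freeDesc M g).app S).hom (((freeFI m).map f).hom (freeGen m j)) = (M.map f).hom (g j) := by
  rw [freeFI_map_gen]
  refine (Finsupp.linearCombination_single _ _ _).trans ?_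
  simp

variable {m} in
lemma freeFI_span (S : FIObj) (N : Submodule ℂ ((freeFI m).obj S))
    (h : ∀ j (f : FIObj.of (Fin (m j)) ⟶ S), ((freeFI m).map f).hom (freeGen m j) ∈ N) : N = ⊤ := by
  rw [eq_top_iff]
  rintro (x : (Σ j, (FIObj.of (Fin (m j)) ⟶ S)) →₀ ℂ) -
  induction x using Finsupp.induction_linear with
  | zero => exact N.zero_mem
  | add x y hx hy => exact N.add_mem hx hy
  | single p a =>
    have := N.smul_mem a (h p.1 p.2)
    rw [freeFI_map_gen] at this
    have e : Finsupp.single p a = a • Finsupp.single p (1 : ℂ) := by simp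
    rw [e]
    exact this

variable {m} in
lemma freeFI_hom_ext (M : FIMod) (a b : freeFI m ⟶ M)
    (h : ∀ j, (a.app _).hom (freeGen m j) = (b.app _).hom (freeGen m j)) : a = b := by
  apply NatTrans.ext
  funext S
  apply ModuleCat.hom_ext
  rw [← LinearMap.eqLocus_eq_top]
  apply freeFI_span
  intro j f
  rw [LinearMap.mem_eqLocus]
  have h1 := congrArg (fun t => t.hom (freeGen m j)) (a.naturality f)
  have h2 := congrArg (fun t => t.hom (freeGen m j)) (b.naturality f)
  simp only [ModuleCat.hom_comp, LinearMap.comp_apply] at h1 h2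
  rw [h1, h2, h]

instance freeFI_projective : Projective (freeFI m) where
  factors {E X} f e he := by
    have hs : ∀ S, Function.Surjective (e.app S).hom := fun S =>
      (ModuleCat.epi_iff_surjective (e.app S)).mp inferInstance
    choose l hl using fun j => hs _ ((f.app _).hom (freeGen m j))
    refine ⟨freeDesc E l, ?_⟩
    apply freeFI_hom_ext
    intro j
    have := freeDesc_gen m E l j (𝟙 _)
    simp only [CategoryTheory.Functor.map_id, ModuleCat.hom_id, LinearMap.id_apply] at this
    rw [NatTrans.comp_app, ModuleCat.hom_comp, LinearMap.comp_apply, this, hl]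

lemma freeFI_FGBound (b : ℕ) (hm : ∀ j, m j ≤ b) : FIMod.FGBound (freeFI m) b := by
  refine ⟨k, fun j => FIObj.of (Fin (m j)), freeGen m, fun j => ?_, fun N hN T => ?_⟩
  · change Fintype.card (Fin (m j)) ≤ b
    simpa using hm j
  · apply freeFI_span
    intro j f
    exact N.map_mem f _ (hN j)

lemma freeFI_ev_span (α : Type) [Fintype α] :
    Submodule.span ℂ (Set.range (ev (freeFI m) (freeGen m) : Wt m α → _)) = ⊤ := by
  apply freeFI_span
  rintro j ⟨f, hf⟩
  exact Submodule.subset_span ⟨Wt.mk j f, ev_mk _ _ j f hf⟩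

lemma freeFI_finite (S : FIObj) : Module.Finite ℂ ((freeFI m).obj S) := by
  have : ∀ j, Finite (FIObj.of (Fin (m j)) ⟶ S) := by
    intro j
    change Finite {f : Fin (m j) → S.α // Function.Injective f}
    infer_instance
  change Module.Finite ℂ ((Σ j, (FIObj.of (Fin (m j)) ⟶ S)) →₀ ℂ)
  infer_instance

noncomputable def freeCoord {S : FIObj} (p : Σ j, (FIObj.of (Fin (m j)) ⟶ S)) :
    (freeFI m).obj S →ₗ[ℂ] ℂ := (Finsupp.lapply (R := ℂ) (M := ℂ) p)

lemma freeCoord_gen {S : FIObj} (p q : Σ j, (FIObj.of (Fin (m j)) ⟶ S)) :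
    freeCoord m p (((freeFI m).map q.2).hom (freeGen m q.1)) =
      (Finsupp.single q (1 : ℂ)) p := by
  rw [freeFI_map_gen]
  rfl

lemma freeFI_eT_indep {n : ℕ} (T : Finset (Fin n)) (w : Wt m (Fin n)) :
    eT (freeFI m) (freeGen m) w T ∈
      Submodule.span ℂ ((fun v => eT (freeFI m) (freeGen m) v T) '' Set.Iio w) ↔
    ¬ (Function.Injective (ofLex (ofLex w).2) ∧ ∀ l, (ofLex (ofLex w).2) l ∉ T) := by
  classical
  obtain ⟨j, f, rfl⟩ := w.exists_mk
  change _ ↔ ¬ (Function.Injective f ∧ ∀ l, f l ∉ T)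
  by_cases hf : ∀ l, f l ∉ T
  · obtain ⟨f', rfl⟩ := exists_corestrict T f hf
    rw [eT_span, eT_mk]
    by_cases hi : Function.Injective f'
    · refine iff_of_false ?_ (not_not.mpr ⟨Subtype.val_injective.comp hi, hf⟩)
      intro hmem
      let p : (Σ j', (FIObj.of (Fin (m j')) ⟶ FIObj.of {x : Fin n // x ∉ T})) := ⟨j, ⟨f', hi⟩⟩
      have hle : Submodule.span ℂ (ev (freeFI m) (freeGen m) '' Set.Iio (Wt.mk j f')) ≤
          LinearMap.ker (freeCoord m p) := by
        rw [Submodule.span_le]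
        rintro _ ⟨v, hv, rfl⟩
        obtain ⟨j1, f1, rfl⟩ := v.exists_mk
        by_cases hi1 : Function.Injective f1
        · rw [ev_mk _ _ _ _ hi1]
          have hne : (⟨j1, ⟨f1, hi1⟩⟩ :
            (Σ j', (FIObj.of (Fin (m j')) ⟶ FIObj.of {x : Fin n // x ∉ T}))) ≠ p := by
            intro heq
            have : Wt.mk j1 f1 = Wt.mk j f' :=
              congrArg (fun q : (Σ j', (FIObj.of (Fin (m j')) ⟶ FIObj.of {x : Fin n // x ∉ T})) =>
                Wt.mk q.1 q.2.1) heq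
            rw [this] at hv
            exact lt_irrefl (Wt.mk j f') hv
          exact (freeCoord_gen m p ⟨j1, ⟨f1, hi1⟩⟩).trans (Finsupp.single_eq_of_ne hne.symm)
        · rw [ev_mk_not _ _ _ _ hi1]
          exact Submodule.zero_mem _
      have h1 := hle hmem
      rw [ev_mk _ _ _ _ hi] at h1
      have h2 : (Finsupp.single p (1 : ℂ)) p = 0 := (freeCoord_gen m p p).symm.trans h1
      simp at h2
    · rw [ev_mk_not _ _ _ _ hi]
      exact iff_of_true (Submodule.zero_mem _) (fun h => hi (Function.Injective.of_comp h.1))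
  · rw [eT_mk_not _ _ _ _ _ hf]
    exact iff_of_true (Submodule.zero_mem _) (fun h => hf h.2)

theorem freeFI_HV (b : ℕ) (hm : ∀ j, m j ≤ b) (n i : ℕ) (hn : b < n) : (cubeOf (freeFI m) n).HV i := by
  classical
  have : Fintype (Wt m (Fin n)) := by
    unfold Wt Lex
    infer_instance
  refine Cube.HV_of_filtration (cubeOf (freeFI m) n) i (W := Wt m (Fin n))
    (eT (freeFI m) (freeGen m)) ?_ ?_ ?_
  · intro w T U h hw
    exact eT_r _ _ w T U h hw
  · intro T
    exact eT_span_top _ _ T (freeFI_ev_span m _)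
  · intro w
    obtain ⟨c, hc⟩ : ∃ c, ∀ l, (ofLex (ofLex w).2) l ≠ c := by
      by_contra h
      push Not at h
      have := Fintype.card_le_of_surjective _ h
      simp only [Fintype.card_fin] at this
      have := hm (ofLex w).1
      omega
    refine ⟨fun _ _ => True, {c}, fun _ _ _ _ _ _ => trivial, fun _ _ _ _ _ _ _ => trivial, ?_,
      fun _ _ _ => ⟨c, by simp, trivial⟩⟩
    intro c' hc' T hcT _
    rw [Finset.mem_singleton] at hc'
    subst hc'
    refine (freeFI_eT_indep m T w).trans (Iff.trans ?_ (freeFI_eT_indep m (insert c' T) w).symm)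
    refine not_congr (and_congr_right fun _ => forall_congr' fun l => not_congr ?_)
    rw [Finset.mem_insert]
    exact ⟨Or.inr, fun h => h.resolve_left (hc l)⟩

end FreeSec

section KerSec

lemma Cube.d_map {V : Type} [Fintype V] [LinearOrder V] (K L : Cube V)
    (u : ∀ T, K.F T →ₗ[ℂ] L.F T)
    (hu : ∀ {T U : Finset V} (h : T ⊆ U) (z : K.F U), u T (K.r h z) = L.r h (u U z))
    (x : ∀ T, K.F T) (T : Finset V) : L.d (fun T => u T (x T)) T = u T (K.d x T) := by
  unfold Cube.d
  rw [map_sum]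
  apply Finset.sum_congr rfl
  intro t _
  rw [L.q_of _ (Finset.subset_insert t T), K.q_of _ (Finset.subset_insert t T), map_smul, hu]

lemma Cube.HV_ker {V : Type} [Fintype V] [LinearOrder V] (K L Q : Cube V)
    (u : ∀ T, K.F T →ₗ[ℂ] L.F T)
    (hu : ∀ {T U : Finset V} (h : T ⊆ U) (z : K.F U), u T (K.r h z) = L.r h (u U z))
    (v : ∀ T, L.F T →ₗ[ℂ] Q.F T)
    (hv : ∀ {T U : Finset V} (h : T ⊆ U) (z : L.F U), v T (L.r h z) = Q.r h (v U z))
    (huinj : ∀ T, Function.Injective (u T)) (hvsurj : ∀ T, Function.Surjective (v T))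
    (hvu : ∀ T z, v T (u T z) = 0) (hex : ∀ T z, v T z = 0 → ∃ z', u T z' = z)
    (i : ℕ) (hQ : Q.HV (i + 1)) (hL : L.HV i) : K.HV i := by
  classical
  intro x hx hcyc
  obtain ⟨y, hy, hdy⟩ := hL (fun T => u T (x T)) (fun T hT => by simp only; rw [hx T hT, map_zero])
    (fun T => by rw [K.d_map L u hu, hcyc, map_zero])
  obtain ⟨z, hz, hdz⟩ := hQ (fun T => v T (y T)) (fun T hT => by simp only; rw [hy T hT, map_zero])
    (fun T => by rw [L.d_map Q v hv, hdy, hvu])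
  have hz' : ∀ T, ∃ z' : L.F T, v T z' = z T ∧ (T.card ≠ i + 1 + 1 → z' = 0) := by
    intro T
    by_cases h : T.card = i + 1 + 1
    · obtain ⟨z', h'⟩ := hvsurj T (z T)
      exact ⟨z', h', fun h'' => absurd h h''⟩
    · exact ⟨0, by rw [map_zero, hz T h], fun _ => rfl⟩
  choose z' hz' hz's using hz'
  have hvz : ∀ T, v T (L.d z' T) = v T (y T) := by
    intro T
    rw [← L.d_map Q v hv, ← hdz]
    congr 1
    funext T
    exact hz' T
  have hy' : ∀ T, ∃ y' : K.F T, u T y' = y T - L.d z' T := by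
    intro T
    apply hex
    rw [map_sub, hvz, sub_self]
  choose y' hy' using hy'
  refine ⟨y', ?_, ?_⟩
  · intro T hT
    apply huinj T
    rw [hy', hy T hT, L.d_supp (i + 1) z' hz's T hT, map_zero, sub_zero]
  · intro T
    apply huinj T
    rw [← K.d_map L u hu]
    have : (fun T => u T (y' T)) = fun T => y T - L.d z' T := funext hy'
    rw [this, L.d_sub, L.d_d, sub_zero, hdy]

noncomputable def kerFI {P M : FIMod} (ε : P ⟶ M) : FIMod where
  obj S := ModuleCat.of ℂ (LinearMap.ker (ε.app S).hom)
  map {S T} f := ModuleCat.ofHom (((P.map f).hom.restrict (p := LinearMap.ker (ε.app S).hom)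
    (q := LinearMap.ker (ε.app T).hom) (by
      intro x hx
      have h1 := congrArg (fun t => t.hom x) (ε.naturality f)
      simp only [ModuleCat.hom_comp, LinearMap.comp_apply] at h1
      rw [LinearMap.mem_ker] at hx ⊢
      rw [h1, hx, map_zero])))
  map_id S := by
    apply ModuleCat.hom_ext
    ext x
    simp
  map_comp f g := by
    apply ModuleCat.hom_ext
    ext x
    simp

noncomputable def kerι {P M : FIMod} (ε : P ⟶ M) : kerFI ε ⟶ P where
  app S := ModuleCat.ofHom (LinearMap.ker (ε.app S).hom).subtype
  naturality S T f := by
    apply ModuleCat.hom_ext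
    rfl

lemma nat_apply {P M : FIMod} (ε : P ⟶ M) {S T : FIObj} (f : S ⟶ T) (x : P.obj S) :
    (ε.app T).hom ((P.map f).hom x) = (M.map f).hom ((ε.app S).hom x) := by
  have h1 := congrArg (fun t => t.hom x) (ε.naturality f)
  simpa only [ModuleCat.hom_comp, LinearMap.comp_apply] using h1

lemma map_comp_apply' (M : FIMod) {S T U : FIObj} (f : S ⟶ T) (f' : T ⟶ U) (x : M.obj S) :
    (M.map f').hom ((M.map f).hom x) = (M.map (f ≫ f')).hom x := by
  rw [M.map_comp]; rfl

lemma kerFI_HV {P M : FIMod} (ε : P ⟶ M) (hε : ∀ S, Function.Surjective (ε.app S).hom) (n i : ℕ)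
    (hM : (cubeOf M n).HV (i + 1)) (hP : (cubeOf P n).HV i) : (cubeOf (kerFI ε) n).HV i := by
  refine Cube.HV_ker (cubeOf (kerFI ε) n) (cubeOf P n) (cubeOf M n)
    (fun T => ((kerι ε).app _).hom) (fun h z => nat_apply (kerι ε) _ z)
    (fun T => (ε.app _).hom) (fun h z => nat_apply ε _ z) ?_ ?_ ?_ ?_ i hM hP
  · intro T
    exact Subtype.val_injective
  · intro T
    exact hε _
  · intro T z
    exact z.2
  · intro T z hz
    exact ⟨⟨z, hz⟩, rfl⟩

end KerSec

section FinalSec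

def FGFin (M : FIMod) (b : ℕ) : Prop :=
  ∃ (k : ℕ) (m : Fin k → ℕ) (g : ∀ j, M.obj (FIObj.of (Fin (m j)))), (∀ j, m j ≤ b) ∧
    ∀ (S : FIObj) (N : Submodule ℂ (M.obj S)),
      (∀ j (f : FIObj.of (Fin (m j)) ⟶ S), (M.map f).hom (g j) ∈ N) → N = ⊤

lemma FGFin_of_FG (M : FIMod) (h : FIMod.FG M) : ∃ b, FGFin M b := by
  classical
  obtain ⟨k, S, x, hx⟩ := h
  let φ : ∀ j, S j ⟶ FIObj.of (Fin (Fintype.card (S j).α)) := fun j =>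
    ⟨Fintype.equivFin (S j).α, (Fintype.equivFin (S j).α).injective⟩
  let ψ : ∀ j, FIObj.of (Fin (Fintype.card (S j).α)) ⟶ S j := fun j =>
    ⟨(Fintype.equivFin (S j).α).symm, (Fintype.equivFin (S j).α).symm.injective⟩
  have hφψ : ∀ j, φ j ≫ ψ j = 𝟙 _ := by
    intro j
    apply Subtype.ext
    funext t
    exact (Fintype.equivFin (S j).α).symm_apply_apply t
  refine ⟨Finset.univ.sup (fun j => Fintype.card (S j).α), k, fun j => Fintype.card (S j).α,
    fun j => (M.map (φ j)).hom (x j), fun j =>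
      Finset.le_sup (f := fun j => Fintype.card (S j).α) (Finset.mem_univ j), ?_⟩
  let N0 : FISub M := {
    carrier := fun T => Submodule.span ℂ
      (Set.range (fun p : Σ j, (S j ⟶ T) => (M.map p.2).hom (x p.1)))
    map_mem := by
      intro T U f z hz
      change (M.map f).hom z ∈ _
      refine Submodule.span_induction (p := fun z _ => (M.map f).hom z ∈ Submodule.span ℂ
        (Set.range (fun p : Σ j, (S j ⟶ U) => (M.map p.2).hom (x p.1)))) ?_ ?_ ?_ ?_ hz
      · rintro _ ⟨p, rfl⟩
        refine Submodule.subset_span ⟨⟨p.1, p.2 ≫ f⟩, ?_⟩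
        simp only [map_comp_apply']
      · rw [map_zero]; exact Submodule.zero_mem _
      · intro a b _ _ ha hb
        rw [map_add]; exact Submodule.add_mem _ ha hb
      · intro a b _ hb
        rw [map_smul]; exact Submodule.smul_mem _ _ hb }
  intro T N hN
  have h0 : N0.carrier T = ⊤ := hx N0 (fun j => by
    refine Submodule.subset_span ⟨⟨j, 𝟙 _⟩, ?_⟩
    simp) T
  rw [eq_top_iff, ← h0]
  refine Submodule.span_le.mpr ?_
  rintro _ ⟨⟨j, f⟩, rfl⟩
  have := hN j (ψ j ≫ f)
  rw [map_comp_apply', ← Category.assoc, hφψ, Category.id_comp] at this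
  exact this

def RReg (M : FIMod) (b : ℕ) : Prop :=
  (∀ S, Module.Finite ℂ (M.obj S)) ∧ ∀ n i, b + i < n → (cubeOf M n).HV i

lemma RReg_of_FG (M : FIMod) (h : FIMod.FG M) : ∃ b, RReg M b := by
  obtain ⟨b, k, m, g, hm, hg⟩ := FGFin_of_FG M h
  obtain ⟨c, hc⟩ := HV_of_gens M g (by
    intro α _
    apply hg
    rintro j ⟨f, hf⟩
    exact Submodule.subset_span ⟨Wt.mk j f, ev_mk M g j f hf⟩)
  refine ⟨c, fun S => ?_, fun n i => hc n i⟩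
  have : ∀ j, Finite (FIObj.of (Fin (m j)) ⟶ S) := by
    intro j
    change Finite {f : Fin (m j) → S.α // Function.Injective f}
    infer_instance
  have hs := hg S (Submodule.span ℂ (Set.range
    (fun p : Σ j, (FIObj.of (Fin (m j)) ⟶ S) => (M.map p.2).hom (g p.1))))
    (fun j f => Submodule.subset_span ⟨⟨j, f⟩, rfl⟩)
  exact Module.Finite.of_fg_top (hs ▸ Submodule.fg_span (Set.finite_range _))

lemma FGFin_of_RReg (M : FIMod) (b : ℕ) (h : RReg M b) : FGFin M b := by
  classical
  obtain ⟨hfin, hHV⟩ := h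
  have hgen : ∀ n : ℕ, ∃ (r : ℕ) (s : Fin r → M.obj (FIObj.of (Fin n))),
      Submodule.span ℂ (Set.range s) = ⊤ := by
    intro n
    have := hfin (FIObj.of (Fin n))
    exact Module.Finite.exists_fin
  choose r s hs using hgen
  let I := Σ n : Fin (b + 1), Fin (r n)
  let e : Fin (Fintype.card I) ≃ I := (Fintype.equivFin I).symm
  refine ⟨Fintype.card I, fun j => ((e j).1 : ℕ), fun j => s _ (e j).2,
    fun j => Nat.lt_succ_iff.mp (e j).1.2, ?_⟩
  let Q : ∀ S : FIObj, Submodule ℂ (M.obj S) := fun S => Submodule.span ℂ (Set.range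
    (fun p : Σ i : I, (FIObj.of (Fin i.1) ⟶ S) => (M.map p.2).hom (s _ p.1.2)))
  have hQmap : ∀ {S T : FIObj} (f : S ⟶ T) (x : M.obj S), x ∈ Q S → (M.map f).hom x ∈ Q T := by
    intro T U f z hz
    refine Submodule.span_induction (p := fun z _ => (M.map f).hom z ∈ Q U) ?_ ?_ ?_ ?_ hz
    · rintro _ ⟨p, rfl⟩
      refine Submodule.subset_span ⟨⟨p.1, p.2 ≫ f⟩, ?_⟩
      simp only [map_comp_apply']
    · rw [map_zero]; exact Submodule.zero_mem _
    · intro a b _ _ ha hb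
      rw [map_add]; exact Submodule.add_mem _ ha hb
    · intro a b _ hb
      rw [map_smul]; exact Submodule.smul_mem _ _ hb
  have hiso : ∀ {S T : FIObj} (φ : S.α ≃ T.α), Q S = ⊤ → Q T = ⊤ := by
    intro S T φ hS
    rw [eq_top_iff]
    intro x _
    let f : S ⟶ T := ⟨φ, φ.injective⟩
    let f' : T ⟶ S := ⟨φ.symm, φ.symm.injective⟩
    have hff : f' ≫ f = 𝟙 _ := by
      apply Subtype.ext
      funext t
      exact φ.apply_symm_apply t
    have := hQmap f ((M.map f').hom x) (by rw [hS]; trivial)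
    rw [map_comp_apply', hff, M.map_id] at this
    exact this
  have hQ : ∀ (c : ℕ) (S : FIObj), Fintype.card S.α = c → Q S = ⊤ := by
    intro c
    induction c with
    | zero =>
      intro S hS
      refine hiso (S := FIObj.of (Fin 0)) (Fintype.equivFinOfCardEq hS).symm ?_
      rw [eq_top_iff, ← hs 0, Submodule.span_le]
      rintro _ ⟨l, rfl⟩
      refine Submodule.subset_span ⟨⟨(⟨⟨0, by omega⟩, l⟩ : I), 𝟙 _⟩, ?_⟩
      simp
    | succ c ih =>
      intro S hS
      by_cases hc : c + 1 ≤ b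
      · refine hiso (S := FIObj.of (Fin (c + 1))) (Fintype.equivFinOfCardEq hS).symm ?_
        rw [eq_top_iff, ← hs (c + 1), Submodule.span_le]
        rintro _ ⟨l, rfl⟩
        refine Submodule.subset_span ⟨⟨(⟨⟨c + 1, by omega⟩, l⟩ : I), 𝟙 _⟩, ?_⟩
        simp
      · let φ : {x : Fin (c + 1) // x ∉ (∅ : Finset (Fin (c + 1)))} ≃ S.α :=
          (Equiv.subtypeUnivEquiv (by simp)).trans (Fintype.equivFinOfCardEq hS).symm
        refine hiso (S := FIObj.of {x : Fin (c + 1) // x ∉ (∅ : Finset (Fin (c + 1)))}) φ ?_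
        rw [eq_top_iff]
        intro x _
        let K := cubeOf M (c + 1)
        let X : ∀ T, K.F T := Pi.single (M := K.F) ∅ x
        have hX : ∀ T, T ≠ ∅ → X T = 0 := fun T hT => Pi.single_eq_of_ne hT _
        obtain ⟨y, _, hy⟩ := hHV (c + 1) 0 (by omega) X
          (by
            intro T hT
            exact hX T (fun h => hT (by rw [h]; rfl)))
          (by
            intro T
            apply Finset.sum_eq_zero
            intro t _
            rw [Cube.q_of _ _ (Finset.subset_insert t T), hX _ (Finset.insert_ne_empty _ _),
              map_zero, smul_zero])
        have h1 : K.d y ∅ = x := (hy ∅).trans (Pi.single_eq_same _ _)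
        rw [← h1]
        refine Submodule.sum_mem _ (fun t _ => Submodule.smul_mem _ _ ?_)
        rw [Cube.q_of _ _ (Finset.subset_insert t ∅)]
        refine hQmap _ _ ?_
        rw [ih]
        · trivial
        · change Fintype.card {x : Fin (c + 1) // x ∉ insert t (∅ : Finset (Fin (c + 1)))} = c
          rw [Fintype.card_subtype_compl]
          simp
  intro S N hN
  rw [eq_top_iff, ← hQ _ S rfl]
  refine Submodule.span_le.mpr ?_
  rintro _ ⟨⟨i, f⟩, rfl⟩
  obtain ⟨j, rfl⟩ := e.surjective i
  exact hN j f

lemma RReg_step (M : FIMod) (b : ℕ) (h : RReg M b) : ∃ (P : FIMod) (ε : P ⟶ M), Projective P ∧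
    FIMod.FGBound P b ∧ (∀ S, Function.Surjective (ε.app S).hom) ∧ RReg (kerFI ε) (b + 1) := by
  obtain ⟨k, m, g, hm, hg⟩ := FGFin_of_RReg M b h
  have hsurj : ∀ S, Function.Surjective ((freeDesc M g).app S).hom := by
    intro S
    rw [← LinearMap.range_eq_top]
    apply hg
    intro j f
    exact ⟨_, freeDesc_gen m M g j f⟩
  refine ⟨freeFI m, freeDesc M g, inferInstance, freeFI_FGBound m b hm, hsurj, ?_, ?_⟩
  · intro S
    have := freeFI_finite m S
    change Module.Finite ℂ (LinearMap.ker ((freeDesc M g).app S).hom)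
    infer_instance
  · intro n i hn
    exact kerFI_HV _ hsurj n i (h.2 n (i + 1) (by omega)) (freeFI_HV m b hm n i (by omega))

end FinalSec

/-- Every finitely generated FI-module has a projective resolution
`⋯ → P_1 → P_0 → M → 0` in which each `P_i` is a finitely generated projective object
generated in degrees ≤ N + i; in particular finitely generated FI-modules have finite
Castelnuovo–Mumford regularity. -/
theorem fg_FIMod_finite_regularity (M : FIMod) (hM : FIMod.FG M) :
    ∃ (N : ℕ) (P : ℕ → FIMod) (d : ∀ i, P (i + 1) ⟶ P i) (ε : P 0 ⟶ M),
      (∀ i, Projective (P i)) ∧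
      (∀ i, FIMod.FGBound (P i) (N + i)) ∧
      (∀ S : FIObj, Function.Surjective (ε.app S)) ∧
      (∀ S : FIObj, LinearMap.range ((d 0).app S).hom = LinearMap.ker (ε.app S).hom) ∧
      (∀ (i : ℕ) (S : FIObj),
        LinearMap.range ((d (i + 1)).app S).hom = LinearMap.ker ((d i).app S).hom) := by
  obtain ⟨N, hN⟩ := RReg_of_FG M hM
  choose P ε hproj hfg hsurj hker using RReg_step
  let X : ∀ i : ℕ, {M : FIMod // RReg M (N + i)} := fun i => Nat.rec ⟨M, hN⟩
    (fun i X => ⟨kerFI (ε X.1 (N + i) X.2), hker X.1 (N + i) X.2⟩) i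
  have hrange : ∀ (i : ℕ) (S : FIObj), LinearMap.range
      ((ε (X (i + 1)).1 (N + (i + 1)) (X (i + 1)).2 ≫ kerι (ε (X i).1 (N + i) (X i).2)).app S).hom =
      LinearMap.ker ((ε (X i).1 (N + i) (X i).2).app S).hom := by
    intro i S
    ext z
    constructor
    · rintro ⟨w, rfl⟩
      exact (((ε (X (i + 1)).1 (N + (i + 1)) (X (i + 1)).2).app S).hom w).2
    · intro hz
      obtain ⟨w, hw⟩ := hsurj (X (i + 1)).1 (N + (i + 1)) (X (i + 1)).2 S ⟨z, hz⟩
      refine ⟨w, ?_⟩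
      exact congrArg Subtype.val hw
  refine ⟨N, fun i => P (X i).1 (N + i) (X i).2,
    fun i => ε (X (i + 1)).1 (N + (i + 1)) (X (i + 1)).2 ≫ kerι (ε (X i).1 (N + i) (X i).2),
    ε (X 0).1 (N + 0) (X 0).2, fun i => hproj _ _ _, fun i => hfg _ _ _, fun S => hsurj _ _ _ S,
    fun S => hrange 0 S, fun i S => ?_⟩
  rw [hrange (i + 1) S]
  ext z
  constructor
  · intro hz
    exact congrArg Subtype.val hz
  · intro hz
    exact Subtype.ext hz
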